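/- arXiv:0806.0836 — 3 statements merged into one kernel-verified Lean document; each statement's English description precedes it below -/
import Mathlib

section
/- Let Γ and Γ' be finite connected loopless multigraphs, let w be a weight on Γ, and let φ : Γ → Γ' be a w-harmonic morphism. Assume Γ' has at least one edge and Γ has at least one edge. Then for any two edges e' and e'' of Γ', one has Σ_{e ∈ φ^{-1}(e')} w(e) = Σ_{e ∈ φ^{-1}(e'')} w(e); that is, the degree deg φ := Σ_{e ∈ φ^{-1}(e')} w(e) of the w-harmonic morphism φ is well-defined, independent of the choice of edge e' of Γ'. -/
open Finset

/-- A finite loopless connected multigraph: vertices `V`, edges `E`, each edge incident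
to an unordered pair of distinct vertices. -/
structure Multigraph (V E : Type) [Fintype V] [Fintype E] where
  inc : E → Sym2 V
  loopless : ∀ e, ¬ (inc e).IsDiag
  connected : (SimpleGraph.fromRel fun u v => ∃ e, inc e = s(u, v)).Connected

variable {V E V' E' : Type} [Fintype V] [Fintype E] [Fintype V'] [Fintype E']
  [DecidableEq V] [DecidableEq E] [DecidableEq V'] [DecidableEq E']

/-- The degree of a vertex: the number of edges incident to it. -/
def Multigraph.deg (G : Multigraph V E) (v : V) : ℤ :=
  ((univ.filter fun e => v ∈ G.inc e).card : ℤ)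

/-- The first Betti number `#E - #V + 1` of a connected graph. -/
def Multigraph.b1 (G : Multigraph V E) : ℤ :=
  (Fintype.card E : ℤ) - (Fintype.card V : ℤ) + 1

/-- The canonical divisor `K_Γ(v) = deg v - 2`. -/
def Multigraph.K (G : Multigraph V E) : V → ℤ := fun v => G.deg v - 2

/-- A morphism of multigraphs: maps on vertices and edges compatible with incidence. -/
structure GraphHom (G : Multigraph V E) (G' : Multigraph V' E') where
  vmap : V → V'
  emap : E → E'
  compat : ∀ e : E, Sym2.map vmap (G.inc e) = G'.inc (emap e)

/-- `localDeg G G' φ w v e'` is `Σ_{e incident to v, φ(e) = e'} w(e)`. -/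
def localDeg (G : Multigraph V E) (G' : Multigraph V' E') (φ : GraphHom G G')
    (w : E → ℤ) (v : V) (e' : E') : ℤ :=
  ∑ e ∈ univ.filter (fun e => v ∈ G.inc e ∧ φ.emap e = e'), w e

/-!
Fix a vertex `x` of an edge `e'` of `Γ'`. Since `e'` is not a loop, each edge of `Γ` over `e'` has
exactly one endpoint over `x`, so the weight of the fiber over `e'` is the sum over the vertices
above `x` of the local weights in the direction `e'`. By harmonicity the latter do not depend on
the edge at `x`; hence edges of `Γ'` sharing a vertex have fibers of equal weight, and
connectedness of `Γ'` propagates the equality.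
-/

section Harmonic

variable {V E V' E' M α : Type*}

/-- The simple graph underlying a multigraph with incidence map `inc`: distinct vertices are
adjacent when some edge joins them. -/
def adjGraph (inc : E → Sym2 V) : SimpleGraph V :=
  SimpleGraph.fromRel fun u v => ∃ e, inc e = s(u, v)

theorem exists_mem_inc_of_adjGraph_adj {inc : E → Sym2 V} {u v : V} (h : (adjGraph inc).Adj u v) :
    ∃ e, u ∈ inc e ∧ v ∈ inc e := by
  obtain ⟨-, ⟨e, he⟩ | ⟨e, he⟩⟩ := (SimpleGraph.fromRel_adj _ _ _).1 h
  · exact ⟨e, by simp [he]⟩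
  · exact ⟨e, by simp [he]⟩

theorem eq_of_adjGraph_preconnected {inc : E → Sym2 V} (hconn : (adjGraph inc).Preconnected)
    {F : E → α} (hF : ∀ v e₁ e₂, v ∈ inc e₁ → v ∈ inc e₂ → F e₁ = F e₂) (e₁ e₂ : E) :
    F e₁ = F e₂ := by
  suffices along_walk : ∀ {u v} (_ : (adjGraph inc).Walk u v) {e₁ e₂},
      u ∈ inc e₁ → v ∈ inc e₂ → F e₁ = F e₂ by
    obtain ⟨p⟩ := hconn (inc e₁).out.1 (inc e₂).out.1
    exact along_walk p (Sym2.out_fst_mem _) (Sym2.out_fst_mem _)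
  intro u v p
  induction p with
  | nil => exact hF _ _ _
  | cons hadj _ ih =>
    intro e₁ e₂ h₁ h₂
    obtain ⟨e, hue, hve⟩ := exists_mem_inc_of_adjGraph_adj hadj
    exact (hF _ _ _ h₁ hue).trans (ih hve h₂)

theorem existsUnique_mem_of_mem_map {f : V → V'} {z : Sym2 V} (hz : ¬ (z.map f).IsDiag) {x : V'}
    (hx : x ∈ z.map f) : ∃! v, f v = x ∧ v ∈ z := by
  obtain ⟨a, ⟨b, rfl⟩, rfl⟩ := Sym2.mem_map.1 hx
  have hab : f a ≠ f b := by simpa using hz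
  refine ⟨a, ⟨rfl, Sym2.mem_mk_left a b⟩, fun v ⟨hv, hmem⟩ => ?_⟩
  obtain rfl | rfl := Sym2.mem_iff.1 hmem
  · rfl
  · exact absurd hv.symm hab

variable [Fintype E] [DecidableEq V] [DecidableEq E'] [AddCommMonoid M]

/-- The total weight `Σ_{g e = e'} w e` of the edges over `e'`, which for a harmonic morphism is
its degree. -/
def fiberWeight (g : E → E') (w : E → M) (e' : E') : M :=
  ∑ e with g e = e', w e

/-- The total weight of the edges at `v` lying over `e'`. It is `localDeg` for weights in an
additive commutative monoid and an arbitrary incidence map. -/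
def localWeight (inc : E → Sym2 V) (g : E → E') (w : E → M) (v : V) (e' : E') : M :=
  ∑ e with v ∈ inc e ∧ g e = e', w e

/-- Harmonicity of the pair `f` (on vertices), `g` (on edges) with respect to the weight `w`: the
local weight at `v` is the same for all edges at `f v`. -/
def IsHarmonic (inc : E → Sym2 V) (inc' : E' → Sym2 V') (f : V → V') (g : E → E') (w : E → M) :
    Prop :=
  ∀ v e₁ e₂, f v ∈ inc' e₁ → f v ∈ inc' e₂ →
    localWeight inc g w v e₁ = localWeight inc g w v e₂

variable {inc : E → Sym2 V} {inc' : E' → Sym2 V'} {f : V → V'} {g : E → E'}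

theorem sum_localWeight_eq_fiberWeight [DecidableEq V']
    (hcompat : ∀ e, (inc e).map f = inc' (g e)) (w : E → M)
    {s : Finset V} (hs : ∀ e, ∀ v ∈ inc e, v ∈ s)
    {x : V'} {e' : E'} (hloop : ¬ (inc' e').IsDiag) (hx : x ∈ inc' e') :
    ∑ v ∈ s with f v = x, localWeight inc g w v e' = fiberWeight g w e' := by
  have endpoint_unique (e : E) (he : g e = e') : ∃ a, {v ∈ s | f v = x ∧ v ∈ inc e} = {a} := by
    subst he
    rw [← hcompat] at hloop hx
    obtain ⟨a, ha, ha_unique⟩ := existsUnique_mem_of_mem_map hloop hx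
    refine ⟨a, eq_singleton_iff_unique_mem.2 ⟨mem_filter.2 ⟨hs e a ha.2, ha⟩, fun v hv => ?_⟩⟩
    exact ha_unique v (mem_filter.1 hv).2
  calc ∑ v ∈ s with f v = x, localWeight inc g w v e'
    _ = ∑ e with g e = e', ∑ v ∈ s with f v = x ∧ v ∈ inc e, w e :=
      sum_comm' fun v e => by simp only [mem_filter, mem_univ, true_and]; tauto
    _ = fiberWeight g w e' := sum_congr rfl fun e he => by
      obtain ⟨a, ha⟩ := endpoint_unique e (mem_filter.1 he).2
      rw [ha, sum_singleton]

theorem IsHarmonic.fiberWeight_eq_of_mem {w : E → M} (hharm : IsHarmonic inc inc' f g w)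
    (hcompat : ∀ e, (inc e).map f = inc' (g e)) (hloop : ∀ e', ¬ (inc' e').IsDiag)
    {x : V'} {e₁ e₂ : E'} (h₁ : x ∈ inc' e₁) (h₂ : x ∈ inc' e₂) :
    fiberWeight g w e₁ = fiberWeight g w e₂ := by
  classical
  let endpoints : Finset V := univ.biUnion fun e => (inc e).toFinset
  have mem_endpoints (e : E) (v : V) (hv : v ∈ inc e) : v ∈ endpoints :=
    mem_biUnion.2 ⟨e, mem_univ e, Sym2.mem_toFinset.2 hv⟩
  rw [← sum_localWeight_eq_fiberWeight hcompat w mem_endpoints (hloop e₁) h₁,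
    ← sum_localWeight_eq_fiberWeight hcompat w mem_endpoints (hloop e₂) h₂]
  refine sum_congr rfl fun v hv => ?_
  obtain rfl : f v = x := (mem_filter.1 hv).2
  exact hharm v e₁ e₂ h₁ h₂

theorem degree_well_defined_general {w : E → M} (hharm : IsHarmonic inc inc' f g w)
    (hcompat : ∀ e, (inc e).map f = inc' (g e)) (hloop : ∀ e', ¬ (inc' e').IsDiag)
    (hconn : (adjGraph inc').Preconnected) (e' e'' : E') :
    fiberWeight g w e' = fiberWeight g w e'' :=
  eq_of_adjGraph_preconnected hconn
    (fun _ _ _ h₁ h₂ => hharm.fiberWeight_eq_of_mem hcompat hloop h₁ h₂) e' e''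

end Harmonic

/-- For a `w`-harmonic morphism `φ : Γ → Γ'` of finite connected loopless
multigraphs (both having at least one edge), the sum `Σ_{e ∈ φ⁻¹(e')} w(e)` is the same
for any two edges `e'`, `e''` of `Γ'`; i.e. the degree of `φ` is well-defined. -/
theorem degree_well_defined
    (G : Multigraph V E) (G' : Multigraph V' E') (φ : GraphHom G G')
    (w : E → ℤ) (hw : ∀ e, 0 < w e)
    (hharm : ∀ (v : V) (e₁ e₂ : E'), φ.vmap v ∈ G'.inc e₁ → φ.vmap v ∈ G'.inc e₂ →
      localDeg G G' φ w v e₁ = localDeg G G' φ w v e₂)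
    (hE : Nonempty E) (hE' : Nonempty E') (e' e'' : E') :
    ∑ e ∈ univ.filter (fun e => φ.emap e = e'), w e
      = ∑ e ∈ univ.filter (fun e => φ.emap e = e''), w e := by
  exact degree_well_defined_general (inc := G.inc) (inc' := G'.inc) hharm φ.compat G'.loopless
    G'.connected.preconnected e' e''
end

section
/- Let Γ and Γ' be finite connected loopless multigraphs, each with at least one edge, let w be a weight on Γ, and let φ : Γ → Γ' be a w-harmonic morphism of degree d. Then for every vertex v' of Γ' one has d = Σ_{v ∈ φ^{-1}(v')} m_φ(v). -/
open Finset

variable {V E V' E' : Type} [Fintype V] [Fintype E] [Fintype V'] [Fintype E']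
  [DecidableEq V] [DecidableEq E] [DecidableEq V'] [DecidableEq E']

/-!
Fix an edge `e'` at `v'`; one exists because `Γ'` is connected and has an edge. As `Γ'` is
loopless, every edge over `e'` has exactly one endpoint over `v'`, so summing the multiplicities
over the fibre of `v'` counts each edge over `e'` exactly once.
-/

namespace Multigraph

omit [DecidableEq V] [DecidableEq E]

theorem nontrivial_of_nonempty_edges [Nonempty E] (G : Multigraph V E) : Nontrivial V := by
  obtain ⟨e⟩ := ‹Nonempty E›
  obtain ⟨⟨a, b⟩, hab⟩ := Sym2.mk_surjective (G.inc e)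
  have hne : a ≠ b := by simpa [← hab] using G.loopless e
  exact ⟨a, b, hne⟩

theorem exists_mem_inc [Nonempty E] (G : Multigraph V E) (v : V) : ∃ e, v ∈ G.inc e := by
  have := G.nontrivial_of_nonempty_edges
  obtain ⟨u, hvu⟩ := G.connected.preconnected.exists_adj_of_nontrivial v
  obtain ⟨-, ⟨e, he⟩ | ⟨e, he⟩⟩ := (SimpleGraph.fromRel_adj _ _ _).1 hvu
  · exact ⟨e, he ▸ Sym2.mem_mk_left v u⟩
  · exact ⟨e, he ▸ Sym2.mem_mk_right u v⟩

end Multigraph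

namespace GraphHom

variable {G : Multigraph V E} {G' : Multigraph V' E'}

omit [DecidableEq V] [DecidableEq E] [DecidableEq V'] [DecidableEq E']

theorem injOn_vmap_inc (φ : GraphHom G G') (e : E) : Set.InjOn φ.vmap {v | v ∈ G.inc e} := by
  intro u hu v hv huv
  by_contra hne
  have hinc : G.inc e = s(u, v) := (Sym2.mem_and_mem_iff hne).1 ⟨hu, hv⟩
  have hloop := G'.loopless (φ.emap e)
  rw [← φ.compat e, hinc, Sym2.map_mk, Sym2.mk_isDiag_iff] at hloop
  exact hloop huv

theorem existsUnique_mem_inc_vmap_eq (φ : GraphHom G G') {e : E} {v' : V'}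
    (hv' : v' ∈ G'.inc (φ.emap e)) : ∃! v, v ∈ G.inc e ∧ φ.vmap v = v' := by
  rw [← φ.compat e] at hv'
  obtain ⟨v, hv, rfl⟩ := Sym2.mem_map.1 hv'
  exact ⟨v, ⟨hv, rfl⟩, fun u ⟨hu, huv⟩ => φ.injOn_vmap_inc e hu hv huv⟩

theorem sum_fiber_sum_inc_eq_sum_fiber [DecidableEq V] [DecidableEq V'] [DecidableEq E']
    {M : Type*} [AddCommMonoid M] (φ : GraphHom G G') (w : E → M) {v' : V'} {e' : E'}
    (hv' : v' ∈ G'.inc e') :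
    ∑ v with φ.vmap v = v', ∑ e with v ∈ G.inc e ∧ φ.emap e = e', w e =
      ∑ e with φ.emap e = e', w e :=
  calc ∑ v with φ.vmap v = v', ∑ e with v ∈ G.inc e ∧ φ.emap e = e', w e
      = ∑ e with φ.emap e = e', ∑ v with v ∈ G.inc e ∧ φ.vmap v = v', w e :=
        Finset.sum_comm' fun v e => by
          simp only [mem_filter_univ]
          tauto
    _ = ∑ e with φ.emap e = e', w e := Finset.sum_congr rfl fun e he => by
        have hv'e : v' ∈ G'.inc (φ.emap e) := by rwa [(mem_filter_univ e).1 he]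
        have hcard : #{v | v ∈ G.inc e ∧ φ.vmap v = v'} = 1 :=
          (Fintype.existsUnique_iff_card_one _).1 (φ.existsUnique_mem_inc_vmap_eq hv'e)
        rw [Finset.sum_const, hcard, one_nsmul]

end GraphHom

omit [DecidableEq E] in
theorem degree_eq_sum_multiplicities_general {M : Type*} [AddCommMonoid M] [Nonempty E']
    (G : Multigraph V E) (G' : Multigraph V' E') (φ : GraphHom G G') (w : E → M) (m : V → M)
    (hm : ∀ (v : V) (e' : E'), φ.vmap v ∈ G'.inc e' →
      ∑ e with v ∈ G.inc e ∧ φ.emap e = e', w e = m v)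
    (d : M) (hd : ∀ e' : E', ∑ e with φ.emap e = e', w e = d) (v' : V') :
    d = ∑ v with φ.vmap v = v', m v := by
  obtain ⟨e', he'⟩ := G'.exists_mem_inc v'
  calc d = ∑ e with φ.emap e = e', w e := (hd e').symm
    _ = ∑ v with φ.vmap v = v', ∑ e with v ∈ G.inc e ∧ φ.emap e = e', w e :=
        (φ.sum_fiber_sum_inc_eq_sum_fiber w he').symm
    _ = ∑ v with φ.vmap v = v', m v := Finset.sum_congr rfl fun v hv =>
        hm v e' (by rwa [(mem_filter_univ v).1 hv])

/-- For a `w`-harmonic morphism `φ : Γ → Γ'` of degree `d` (both graphs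
having at least one edge), for every vertex `v'` of `Γ'` one has
`d = Σ_{v ∈ φ⁻¹(v')} m_φ(v)`. -/
theorem degree_eq_sum_multiplicities
    (G : Multigraph V E) (G' : Multigraph V' E') (φ : GraphHom G G')
    (w : E → ℤ) (hw : ∀ e, 0 < w e) (m : V → ℤ)
    (hm : ∀ (v : V) (e' : E'), φ.vmap v ∈ G'.inc e' → localDeg G G' φ w v e' = m v)
    (hE : Nonempty E) (hE' : Nonempty E') (d : ℤ)
    (hd : ∀ e' : E', ∑ e ∈ univ.filter (fun e => φ.emap e = e'), w e = d)
    (v' : V') :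
    d = ∑ v ∈ univ.filter (fun v => φ.vmap v = v'), m v :=
  degree_eq_sum_multiplicities_general G G' φ w m hm d hd v'
end

section
/- (Tropical Riemann–Hurwitz formula) Let Γ and Γ' be finite connected loopless multigraphs, each with at least one edge, let w be a weight on Γ, and let φ : Γ → Γ' be a w-harmonic morphism of degree d. Then 2·b1(Γ) − 2 = (2·b1(Γ') − 2) · d + deg(R_φ), where R_φ = K_Γ − φ*K_{Γ'} is the ramification divisor of φ. -/
open Finset

variable {V E V' E' : Type} [Fintype V] [Fintype E] [Fintype V'] [Fintype E']
  [DecidableEq V] [DecidableEq E] [DecidableEq V'] [DecidableEq E']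

/-!
Summing `deg v - 2` over all vertices counts every edge twice, so a canonical divisor has degree
`2 b₁ - 2`. It remains to see that pulling back along `φ` multiplies degrees of divisors by `d`,
i.e. that the multiplicities over each vertex `v'` add up to `d`. If `e'` is an edge at `v'`, then
every edge over `e'` has exactly one endpoint over `v'`, because `e'` is not a loop; hence those
multiplicities add up to the weight of the fibre over `e'`. In particular the two endpoints of an
edge of the target give the same sum, and by connectedness all vertices do.
-/

theorem existsUnique_mem_of_mem_map_of_not_isDiag {α β : Type*} {f : α → β} {z : Sym2 α} {b : β}
    (hb : b ∈ z.map f) (hz : ¬ (z.map f).IsDiag) : ∃! a, a ∈ z ∧ f a = b := by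
  obtain ⟨a, ha, rfl⟩ := Sym2.mem_map.mp hb
  refine ⟨a, ⟨ha, rfl⟩, fun c ⟨hc, hfc⟩ => ?_⟩
  by_contra hca
  have hz_eq : z = s(c, a) := (Sym2.mem_and_mem_iff hca).mp ⟨hc, ha⟩
  exact hz (by rw [hz_eq, Sym2.map_mk, hfc]; exact Sym2.mk_isDiag_iff.mpr rfl)

namespace Multigraph

section Divisors

omit [DecidableEq E]

theorem card_filter_mem_inc (G : Multigraph V E) (e : E) : #{v | v ∈ G.inc e} = 2 := by
  simp only [← Sym2.mem_toFinset, filter_univ_mem,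
    Sym2.card_toFinset_of_not_isDiag _ (G.loopless e)]

theorem sum_deg (G : Multigraph V E) : ∑ v, G.deg v = 2 * Fintype.card E := by
  have double_count : ∑ v, #{e | v ∈ G.inc e} = ∑ e, #{v | v ∈ G.inc e} :=
    sum_card_bipartiteAbove_eq_sum_card_bipartiteBelow fun v e => v ∈ G.inc e
  simp only [card_filter_mem_inc, sum_const, card_univ, smul_eq_mul] at double_count
  simp only [deg]
  exact_mod_cast double_count.trans (mul_comm _ _)

theorem sum_K (G : Multigraph V E) : ∑ v, G.K v = 2 * G.b1 - 2 := by
  simp only [K, b1, sum_sub_distrib, sum_deg, sum_const, card_univ, nsmul_eq_mul]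
  ring

end Divisors

omit [DecidableEq V] [DecidableEq E] in
theorem apply_eq_apply_of_forall_mem_inc {α : Type*} (G : Multigraph V E) {f : V → α}
    (hf : ∀ e, ∀ u ∈ G.inc e, ∀ v ∈ G.inc e, f u = f v) (u v : V) : f u = f v := by
  have apply_eq_of_adj {a b : V}
      (hab : (SimpleGraph.fromRel fun u v => ∃ e, G.inc e = s(u, v)).Adj a b) : f a = f b := by
    obtain ⟨-, ⟨e, he⟩ | ⟨e, he⟩⟩ := (SimpleGraph.fromRel_adj _ _ _).mp hab <;>
      exact hf e a (by simp [he]) b (by simp [he])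
  obtain ⟨walk⟩ := G.connected.preconnected u v
  induction walk with
  | nil => rfl
  | cons hadj _ ih => exact (apply_eq_of_adj hadj).trans ih

end Multigraph

namespace GraphHom

omit [DecidableEq E]

variable {G : Multigraph V E} {G' : Multigraph V' E'}

section Weights

variable {M : Type*} [AddCommMonoid M]

/-- The total weight of the edges at `v` over `e'`: the sum `localDeg`, with weights in an
arbitrary additive commutative monoid. -/
def localDegree (φ : GraphHom G G') (w : E → M) (v : V) (e' : E') : M :=
  ∑ e with v ∈ G.inc e ∧ φ.emap e = e', w e

/-- The total weight of the edges over `e'`. For a harmonic morphism this is the degree of `φ`,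
whichever edge `e'` is chosen. -/
def degreeOver (φ : GraphHom G G') (w : E → M) (e' : E') : M :=
  ∑ e with φ.emap e = e', w e

/-- `φ` is `w`-harmonic with multiplicities `m`. The multiplicity function is an argument because
harmonicity does not determine `m v` when no edge of the target is incident to `φ v`. -/
def IsHarmonic (φ : GraphHom G G') (w : E → M) (m : V → M) : Prop :=
  ∀ v e', φ.vmap v ∈ G'.inc e' → φ.localDegree w v e' = m v

omit [DecidableEq E'] in
theorem card_filter_mem_inc_and_vmap_eq (φ : GraphHom G G') {e : E} {v' : V'}
    (hv' : v' ∈ G'.inc (φ.emap e)) : #{v | v ∈ G.inc e ∧ φ.vmap v = v'} = 1 := by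
  rw [← φ.compat e] at hv'
  have not_isDiag_map : ¬ ((G.inc e).map φ.vmap).IsDiag := by
    rw [φ.compat e]
    exact G'.loopless _
  exact (Fintype.existsUnique_iff_card_one _).mp
    (existsUnique_mem_of_mem_map_of_not_isDiag hv' not_isDiag_map)

theorem sum_localDegree_eq_degreeOver (φ : GraphHom G G') (w : E → M) {v' : V'} {e' : E'}
    (hv' : v' ∈ G'.inc e') :
    ∑ v with φ.vmap v = v', φ.localDegree w v e' = φ.degreeOver w e' := by
  calc ∑ v with φ.vmap v = v', ∑ e with v ∈ G.inc e ∧ φ.emap e = e', w e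
      = ∑ e with φ.emap e = e', ∑ v with v ∈ G.inc e ∧ φ.vmap v = v', w e :=
        sum_comm' fun v e => by simp only [mem_filter, mem_univ, true_and]; tauto
    _ = ∑ e with φ.emap e = e', w e := by
        refine sum_congr rfl fun e he => ?_
        obtain rfl : φ.emap e = e' := (mem_filter.mp he).2
        rw [sum_const, φ.card_filter_mem_inc_and_vmap_eq hv', one_smul]

namespace IsHarmonic

variable {φ : GraphHom G G'} {w : E → M} {m : V → M}

theorem sum_multiplicity_eq_degreeOver_of_mem (hm : φ.IsHarmonic w m) {v' : V'} {e' : E'}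
    (hv' : v' ∈ G'.inc e') : ∑ v with φ.vmap v = v', m v = φ.degreeOver w e' := by
  rw [← φ.sum_localDegree_eq_degreeOver w hv']
  refine sum_congr rfl fun v hv => (hm v e' ?_).symm
  rwa [(mem_filter.mp hv).2]

theorem sum_multiplicity_eq_degreeOver (hm : φ.IsHarmonic w m) (v' : V') (e' : E') :
    ∑ v with φ.vmap v = v', m v = φ.degreeOver w e' := by
  have sum_multiplicity_eq (u' : V') :
      ∑ v with φ.vmap v = v', m v = ∑ v with φ.vmap v = u', m v :=
    G'.apply_eq_apply_of_forall_mem_inc (f := fun x' => ∑ v with φ.vmap v = x', m v)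
      (fun _ _ hu _ hv => (hm.sum_multiplicity_eq_degreeOver_of_mem hu).trans
        (hm.sum_multiplicity_eq_degreeOver_of_mem hv).symm) v' u'
  exact (sum_multiplicity_eq _).trans
    (hm.sum_multiplicity_eq_degreeOver_of_mem (Sym2.out_fst_mem (G'.inc e')))

end IsHarmonic

end Weights

omit [DecidableEq V'] in
theorem IsHarmonic.sum_pullback {R : Type*} [NonUnitalNonAssocSemiring R] {φ : GraphHom G G'}
    {w : E → R} {m : V → R} (hm : φ.IsHarmonic w m) (D' : V' → R) (e' : E') :
    ∑ v, m v * D' (φ.vmap v) = φ.degreeOver w e' * ∑ v', D' v' := by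
  classical
  rw [← sum_fiberwise univ φ.vmap, mul_sum]
  refine sum_congr rfl fun v' _ => ?_
  rw [← hm.sum_multiplicity_eq_degreeOver v' e', sum_mul]
  exact sum_congr rfl fun v hv => by rw [(mem_filter.mp hv).2]

end GraphHom

omit [DecidableEq E] in
theorem tropical_riemann_hurwitz_general {R : Type*} [Ring R]
    {G : Multigraph V E} {G' : Multigraph V' E'} {φ : GraphHom G G'}
    {w : E → R} {m : V → R} (hm : φ.IsHarmonic w m) (e' : E') :
    (2 * G.b1 - 2 : R) = (2 * G'.b1 - 2) * φ.degreeOver w e' +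
      ∑ v, (G.K v - m v * G'.K (φ.vmap v)) := by
  have sum_cast_K : ∑ v, (G.K v : R) = 2 * G.b1 - 2 := mod_cast congrArg (Int.cast (R := R)) G.sum_K
  have sum_pullback_K : ∑ v, m v * (G'.K (φ.vmap v) : R) =
      (2 * G'.b1 - 2) * φ.degreeOver w e' := by
    rw [hm.sum_pullback (fun v' => (G'.K v' : R)) e', ← Int.cast_sum, ← Int.cast_comm, G'.sum_K]
    norm_cast
  rw [sum_sub_distrib, sum_cast_K, sum_pullback_K, add_sub_cancel]

/-- Tropical Riemann–Hurwitz formula: For a `w`-harmonic morphism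
`φ : Γ → Γ'` of degree `d` (both graphs having at least one edge),
`2·b1(Γ) - 2 = (2·b1(Γ') - 2)·d + deg R_φ`, where `R_φ = K_Γ - φ*K_{Γ'}`. -/
theorem tropical_riemann_hurwitz
    (G : Multigraph V E) (G' : Multigraph V' E') (φ : GraphHom G G')
    (w : E → ℤ) (hw : ∀ e, 0 < w e) (m : V → ℤ)
    (hm : ∀ (v : V) (e' : E'), φ.vmap v ∈ G'.inc e' → localDeg G G' φ w v e' = m v)
    (hE : Nonempty E) (hE' : Nonempty E') (d : ℤ)
    (hd : ∀ e' : E', ∑ e ∈ univ.filter (fun e => φ.emap e = e'), w e = d) :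
    2 * G.b1 - 2 = (2 * G'.b1 - 2) * d +
      (∑ v : V, (G.K v - m v * G'.K (φ.vmap v))) := by
  obtain ⟨e'⟩ := hE'
  rw [← hd e']
  exact_mod_cast tropical_riemann_hurwitz_general hm e'
end
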